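/- The quadratic polynomial q = ae + bf + cd + de + df + ef + d^2 + e^2 + f^2 ∈ F_2[a,b,c,d,e,f] is a G-invariant: for every σ ∈ G, substituting the linear forms (a,b,c,d,e,f)·D(σ) for the variables fixes q. Moreover, q is a nondegenerate quadratic form of Witt index 3 (plus type) on F_2^6, and the representation D: G → GL_6(F_2) is injective; hence D embeds G = GL_3(F_2) into the orthogonal group O_6^+(F_2) of q. -/

import Mathlib

set_option synthInstance.maxHeartbeats 1000000
set_option maxHeartbeats 1000000

open MvPolynomial

/-- The field with two elements. -/
abbrev F2 := ZMod 2

/-- `G = GL₃(𝔽₂)`. -/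
abbrev G3 := GL (Fin 3) F2

/-- The generator `A` of `G`. -/
def Agen : G3 := ⟨!![1,0,1; 0,1,0; 0,0,1], !![1,0,1; 0,1,0; 0,0,1], by decide, by decide⟩

/-- The generator `B` of `G`. -/
def Bgen : G3 := ⟨!![0,0,1; 1,0,0; 0,1,0], !![0,1,0; 0,0,1; 1,0,0], by decide, by decide⟩

/-- The matrix `D(A)` of the action on `W'^* = 𝔽₂⁶`. -/
def DA6 : Matrix (Fin 6) (Fin 6) F2 :=
  !![1,0,1,0,0,1; 0,1,0,0,0,0; 0,0,1,0,0,0; 0,0,0,1,1,0; 0,0,0,0,1,0; 0,0,0,0,0,1]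

/-- The matrix `D(B)` of the action on `W'^* = 𝔽₂⁶`. -/
def DB6 : Matrix (Fin 6) (Fin 6) F2 :=
  !![0,0,1,0,0,0; 1,0,0,0,0,0; 0,1,0,0,0,0; 0,0,0,0,0,1; 0,0,0,1,0,0; 0,0,0,0,1,0]

/-- The algebra endomorphism of `S[W'^*] = 𝔽₂[a,b,c,d,e,f]` induced by the right action of
`σ` on the linear forms (coefficient row vectors are multiplied on the right by `D σ`; in
particular the variable `Xᵢ` is sent to the linear form given by the `i`-th row of `D σ`). -/
noncomputable def polyAct (D : G3 →* GL (Fin 6) F2) (σ : G3) :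
    MvPolynomial (Fin 6) F2 →ₐ[F2] MvPolynomial (Fin 6) F2 :=
  aeval (fun i => ∑ j, (D σ : Matrix (Fin 6) (Fin 6) F2) i j • X j)

/-- The invariant ring `S[W'^*]^H` for a subgroup `H ≤ G`. -/
noncomputable def invH (D : G3 →* GL (Fin 6) F2) (H : Subgroup G3) :
    Subalgebra F2 (MvPolynomial (Fin 6) F2) where
  carrier := {p | ∀ σ ∈ H, polyAct D σ p = p}
  mul_mem' := fun ha hb σ hσ => by rw [map_mul, ha σ hσ, hb σ hσ]
  add_mem' := fun ha hb σ hσ => by rw [map_add, ha σ hσ, hb σ hσ]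
  one_mem' := fun σ _ => map_one _
  zero_mem' := fun σ _ => map_zero _
  algebraMap_mem' := fun r σ _ => AlgHom.commutes _ r

/-- The invariant ring `S[W'^*]^G`. -/
noncomputable def invG (D : G3 →* GL (Fin 6) F2) :
    Subalgebra F2 (MvPolynomial (Fin 6) F2) :=
  invH D ⊤

/-- The invariant quadric
`q = ae + bf + cd + de + df + ef + d² + e² + f²` in `𝔽₂[a,b,c,d,e,f]`,
with `(a,b,c,d,e,f) = (X 0, …, X 5)`. -/
noncomputable def qForm : MvPolynomial (Fin 6) F2 :=
  X 0 * X 4 + X 1 * X 5 + X 2 * X 3 + X 3 * X 4 + X 3 * X 5 + X 4 * X 5 +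
    X 3 ^ 2 + X 4 ^ 2 + X 5 ^ 2

/-!
Over `𝔽₂` every invertible matrix is a product of transvections `1 + Eᵢⱼ`. The conjugates of `A` by
powers of `B` are the transvections along the directed cycle `0 → 2 → 1 → 0`, and commutators yield
the remaining ones, so `A` and `B` generate `G` as a monoid, and a condition on `σ` that is closed
under products need only be checked for them. One such condition is that `D σ` fixes `q`; another is
that `D σ` is block upper triangular with upper left block `σ`, whence `D` is injective. Finally
`q = (a+d+e)e + (b+e+f)f + (c+d+f)d` is a sum of three hyperbolic planes, so it is nondegenerate and
vanishes on the subspace `d = e = f = 0`.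
-/

section Generation

variable {n R : Type*} [Fintype n] [DecidableEq n] [CommRing R] [CharP R 2]

-- In characteristic two a transvection is its own inverse, so this square is a commutator.
theorem transvection_mul_transvection_sq {i j k : n} (hij : i ≠ j) (hjk : j ≠ k)
    (hik : i ≠ k) (a b : R) :
    (Matrix.transvection i j a * Matrix.transvection j k b) ^ 2 =
      Matrix.transvection i k (a * b) := by
  have add_self_eq_zero (M : Matrix n n R) : M + M = 0 := by
    ext
    exact CharTwo.add_self_eq_zero _
  have expand : (Matrix.transvection i j a * Matrix.transvection j k b) ^ 2 =
      Matrix.transvection i k (a * b) + (Matrix.single i j a + Matrix.single i j a) +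
        (Matrix.single j k b + Matrix.single j k b) +
        (Matrix.single i k (a * b) + Matrix.single i k (a * b)) := by
    simp only [Matrix.transvection, sq, add_mul, mul_add, one_mul, mul_one, add_zero,
      Matrix.single_mul_single_same, Matrix.single_mul_single_of_ne, ne_eq, hij.symm, hjk.symm,
      hik.symm, not_false_eq_true]
    abel
  simp only [expand, add_self_eq_zero, add_zero]

theorem transvection_mem_trans {S : Submonoid (Matrix n n R)} {i j k : n}
    (hij : i ≠ j) (hjk : j ≠ k) (hik : i ≠ k)
    (hSij : Matrix.transvection i j 1 ∈ S) (hSjk : Matrix.transvection j k 1 ∈ S) :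
    Matrix.transvection i k 1 ∈ S := by
  simpa only [transvection_mul_transvection_sq hij hjk hik, mul_one] using
    S.pow_mem (S.mul_mem hSij hSjk) 2

theorem mem_of_isUnit_of_transvection_mem {S : Submonoid (Matrix n n F2)}
    (hS : ∀ i j, i ≠ j → Matrix.transvection i j 1 ∈ S) {M : Matrix n n F2} (hM : IsUnit M) :
    M ∈ S := by
  have eq_one_of_ne_zero : ∀ x : F2, x ≠ 0 → x = 1 := by decide
  have hdet : M.det ≠ 0 := ((Matrix.isUnit_iff_isUnit_det M).1 hM).ne_zero
  refine Matrix.diagonal_transvection_induction_of_det_ne_zero (· ∈ S) M hdet ?diagonal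
    ?transvection fun _ _ _ _ ↦ S.mul_mem
  case diagonal =>
    intro d hd
    rw [Matrix.det_diagonal, Finset.prod_ne_zero_iff] at hd
    have hd_one : d = 1 := funext fun i ↦ eq_one_of_ne_zero _ (hd i (Finset.mem_univ i))
    rw [hd_one, Matrix.diagonal_one']
    exact S.one_mem
  case transvection =>
    rintro ⟨i, j, hij, c⟩
    obtain rfl | hc := eq_or_ne c 0
    · simp [S.one_mem]
    · rw [eq_one_of_ne_zero c hc]
      exact hS i j hij

theorem transvection_mem_of_cycle {S : Submonoid (Matrix (Fin 3) (Fin 3) R)}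
    (h02 : Matrix.transvection 0 2 1 ∈ S) (h21 : Matrix.transvection 2 1 1 ∈ S)
    (h10 : Matrix.transvection 1 0 1 ∈ S) (i j : Fin 3) (hij : i ≠ j) :
    Matrix.transvection i j 1 ∈ S := by
  have h01 : Matrix.transvection 0 1 1 ∈ S :=
    transvection_mem_trans (by decide) (by decide) (by decide) h02 h21
  have h12 : Matrix.transvection 1 2 1 ∈ S :=
    transvection_mem_trans (by decide) (by decide) (by decide) h10 h02
  have h20 : Matrix.transvection 2 0 1 ∈ S :=
    transvection_mem_trans (by decide) (by decide) (by decide) h21 h10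
  fin_cases i <;> fin_cases j <;> first | exact absurd rfl hij | assumption

theorem submonoid_eq_top_of_Agen_mem_of_Bgen_mem {S : Submonoid G3} (hA : Agen ∈ S)
    (hB : Bgen ∈ S) : S = ⊤ := by
  let coe : G3 →* Matrix (Fin 3) (Fin 3) F2 := Units.coeHom _
  have h02 : Matrix.transvection 0 2 1 ∈ S.map coe := ⟨Agen, hA, by decide⟩
  have h10 : Matrix.transvection 1 0 1 ∈ S.map coe :=
    ⟨Bgen * Agen * Bgen ^ 2, S.mul_mem (S.mul_mem hB hA) (S.pow_mem hB 2), by decide⟩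
  have h21 : Matrix.transvection 2 1 1 ∈ S.map coe :=
    ⟨Bgen ^ 2 * Agen * Bgen, S.mul_mem (S.mul_mem (S.pow_mem hB 2) hA) hB, by decide⟩
  refine (Submonoid.eq_top_iff' S).2 fun σ ↦ ?_
  exact (Submonoid.mem_map_iff_mem Units.val_injective).1
    (mem_of_isUnit_of_transvection_mem (transvection_mem_of_cycle h02 h21 h10) σ.isUnit)

end Generation

section Invariance

variable {n R : Type*} [Fintype n] [CommSemiring R]

/-- The matrices `M` whose linear substitution `Xᵢ ↦ ∑ⱼ Mᵢⱼ Xⱼ` fixes the polynomial `p`. -/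
noncomputable def substStabilizer [DecidableEq n] (p : MvPolynomial n R) :
    Submonoid (Matrix n n R) where
  carrier := {M | bind₁ M.toMvPolynomial p = p}
  one_mem' := by simp
  mul_mem' := by
    intro M N (hM : bind₁ M.toMvPolynomial p = p) (hN : bind₁ N.toMvPolynomial p = p)
    have bind₁_mul : bind₁ (M * N).toMvPolynomial p =
        bind₁ N.toMvPolynomial (bind₁ M.toMvPolynomial p) := by
      rw [bind₁_bind₁]
      congr 2 with i : 1
      exact Matrix.toMvPolynomial_mul M N i
    exact bind₁_mul.trans (by rw [hM, hN])

theorem mem_substStabilizer [DecidableEq n] {p : MvPolynomial n R} {M : Matrix n n R} :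
    M ∈ substStabilizer p ↔ aeval (fun i ↦ ∑ j, M i j • X j : n → MvPolynomial n R) p = p := by
  have toMvPolynomial_eq : M.toMvPolynomial = fun i ↦ ∑ j, M i j • X j := by
    funext i
    simp only [Matrix.toMvPolynomial, smul_eq_C_mul, C_mul_X_eq_monomial]
  rw [← toMvPolynomial_eq]
  rfl

theorem DA6_mem_substStabilizer : DA6 ∈ substStabilizer qForm := by
  have two_eq_zero : (2 : MvPolynomial (Fin 6) F2) = 0 := CharTwo.two_eq_zero
  have subst_eq : aeval (fun i ↦ ∑ j, DA6 i j • X j : Fin 6 → MvPolynomial (Fin 6) F2) qForm =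
      (X 0 + X 2 + X 5) * X 4 + X 1 * X 5 + X 2 * (X 3 + X 4) + (X 3 + X 4) * X 4 +
        (X 3 + X 4) * X 5 + X 4 * X 5 + (X 3 + X 4) ^ 2 + X 4 ^ 2 + X 5 ^ 2 := by
    simp [qForm, Fin.sum_univ_six, DA6]
  rw [mem_substStabilizer, subst_eq, qForm]
  linear_combination (X 2 * X 4 + X 4 * X 5 + X 4 ^ 2 + X 3 * X 4) * two_eq_zero

theorem DB6_mem_substStabilizer : DB6 ∈ substStabilizer qForm := by
  have subst_eq : aeval (fun i ↦ ∑ j, DB6 i j • X j : Fin 6 → MvPolynomial (Fin 6) F2) qForm =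
      X 2 * X 3 + X 0 * X 4 + X 1 * X 5 + X 5 * X 3 + X 5 * X 4 + X 3 * X 4 +
        X 5 ^ 2 + X 3 ^ 2 + X 4 ^ 2 := by
    simp [qForm, Fin.sum_univ_six, DB6]
  rw [mem_substStabilizer, subst_eq, qForm]
  ring

end Invariance

section Hyperbolic

variable {R V : Type*} [CommRing R] [AddCommGroup V] [Module R V] (ι : Type*) [Fintype ι]

/-- The function `f` is an orthogonal sum of hyperbolic planes indexed by `ι`: in suitable linear
coordinates `(x, y)` on `V` it is the quadratic form `∑ i, x i * y i`. -/
def IsHyperbolic (f : V → R) : Prop :=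
  ∃ E : V ≃ₗ[R] (ι → R) × (ι → R), ∀ w, f w = (E w).1 ⬝ᵥ (E w).2

variable {ι} {f : V → R}

theorem IsHyperbolic.eq_zero_of_polar_eq_zero (hf : IsHyperbolic ι f) {u : V}
    (hu : ∀ v, QuadraticMap.polar f u v = 0) : u = 0 := by
  obtain ⟨E, hE⟩ := hf
  have polar_eq (v : V) :
      QuadraticMap.polar f u v = (E u).1 ⬝ᵥ (E v).2 + (E v).1 ⬝ᵥ (E u).2 := by
    simp only [QuadraticMap.polar, hE, map_add, Prod.fst_add, Prod.snd_add, add_dotProduct,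
      dotProduct_add]
    ring
  have fst_eq_zero : (E u).1 = 0 := dotProduct_eq_zero _ fun y ↦ by
    simpa [polar_eq] using hu (E.symm (0, y))
  have snd_eq_zero : (E u).2 = 0 := dotProduct_eq_zero _ fun x ↦ by
    simpa [polar_eq, dotProduct_comm] using hu (E.symm (x, 0))
  exact E.map_eq_zero_iff.1 (Prod.ext fst_eq_zero snd_eq_zero)

theorem IsHyperbolic.exists_totallySingular [StrongRankCondition R] (hf : IsHyperbolic ι f) :
    ∃ T : Submodule R V, Module.finrank R T = Fintype.card ι ∧ ∀ w ∈ T, f w = 0 := by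
  obtain ⟨E, hE⟩ := hf
  let incl : (ι → R) →ₗ[R] V := E.symm.toLinearMap ∘ₗ LinearMap.inl R (ι → R) (ι → R)
  have incl_injective : Function.Injective incl := E.symm.injective.comp LinearMap.inl_injective
  refine ⟨LinearMap.range incl, ?_, ?_⟩
  · rw [LinearMap.finrank_range_of_inj incl_injective, Module.finrank_fintype_fun_eq_card]
  · rintro _ ⟨x, rfl⟩
    simp [hE, incl]

/-- The linear coordinates `((a+d+e, b+e+f, c+d+f), (e, f, d))` on `𝔽₂⁶`, in which `q` becomes a sum
of three hyperbolic planes. -/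
def hyperbolicCoordinates : (Fin 6 → F2) ≃ₗ[F2] (Fin 3 → F2) × (Fin 3 → F2) where
  toFun w := (![w 0 + w 3 + w 4, w 1 + w 4 + w 5, w 2 + w 3 + w 5], ![w 4, w 5, w 3])
  invFun p := ![p.1 0 - p.2 2 - p.2 0, p.1 1 - p.2 0 - p.2 1, p.1 2 - p.2 2 - p.2 1,
    p.2 2, p.2 0, p.2 1]
  map_add' v w := by ext i <;> fin_cases i <;> simp <;> ring
  map_smul' c w := by ext i <;> fin_cases i <;> simp <;> ring
  left_inv w := by ext i; fin_cases i <;> simp <;> ring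
  right_inv p := by ext i <;> fin_cases i <;> simp <;> ring

theorem isHyperbolic_eval_qForm : IsHyperbolic (Fin 3) fun w : Fin 6 → F2 ↦ eval w qForm := by
  refine ⟨hyperbolicCoordinates, fun w ↦ ?_⟩
  have dotProduct_eq : (hyperbolicCoordinates w).1 ⬝ᵥ (hyperbolicCoordinates w).2 =
      (w 0 + w 3 + w 4) * w 4 + (w 1 + w 4 + w 5) * w 5 + (w 2 + w 3 + w 5) * w 3 := by
    simp [hyperbolicCoordinates, add_assoc]
  simp only [dotProduct_eq, qForm, map_add, map_mul, map_pow, eval_X]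
  ring

end Hyperbolic

section BlockTriangular

variable {m n k R : Type*} [Fintype m] [Fintype n] [Fintype k] [DecidableEq m] [DecidableEq n]
  [DecidableEq k] [Semiring R]

/-- The pairs `(P, M)` for which `M` is block upper triangular with upper left block `P`, the rows
and columns of `M` being split into two blocks by `e`. -/
def upperLeftBlockGraph (e : m ⊕ n ≃ k) : Submonoid (Matrix m m R × Matrix k k R) where
  carrier := {p | ∃ B C, p.2.submatrix e e = Matrix.fromBlocks p.1 B 0 C}
  one_mem' := ⟨0, 1, by simp⟩
  mul_mem' := by
    rintro ⟨P, M⟩ ⟨P', M'⟩ ⟨B, C, hM⟩ ⟨B', C', hM'⟩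
    refine ⟨P * B' + B * C', C * C', ?_⟩
    simp only [Prod.mk_mul_mk, ← Matrix.submatrix_mul_equiv M M' e e e, hM, hM',
      Matrix.fromBlocks_multiply, Matrix.mul_zero, Matrix.zero_mul, add_zero, zero_add]

theorem eq_of_mem_upperLeftBlockGraph {e : m ⊕ n ≃ k} {P P' : Matrix m m R} {M : Matrix k k R}
    (hP : (P, M) ∈ upperLeftBlockGraph e) (hP' : (P', M) ∈ upperLeftBlockGraph e) : P = P' := by
  obtain ⟨B, C, hM⟩ := hP
  obtain ⟨B', C', hM'⟩ := hP'
  exact (Matrix.fromBlocks_inj.1 (hM.symm.trans hM')).1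

theorem Agen_DA6_mem_upperLeftBlockGraph :
    ((Agen : Matrix (Fin 3) (Fin 3) F2), DA6) ∈
      upperLeftBlockGraph (finSumFinEquiv (m := 3) (n := 3)) :=
  ⟨!![0, 0, 1; 0, 0, 0; 0, 0, 0], !![1, 1, 0; 0, 1, 0; 0, 0, 1], by decide⟩

theorem Bgen_DB6_mem_upperLeftBlockGraph :
    ((Bgen : Matrix (Fin 3) (Fin 3) F2), DB6) ∈
      upperLeftBlockGraph (finSumFinEquiv (m := 3) (n := 3)) :=
  ⟨0, !![0, 0, 1; 1, 0, 0; 0, 1, 0], by decide⟩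

end BlockTriangular

section Representation

variable {D : G3 →* GL (Fin 6) F2}

theorem polyAct_qForm (hA : (D Agen : Matrix (Fin 6) (Fin 6) F2) = DA6)
    (hB : (D Bgen : Matrix (Fin 6) (Fin 6) F2) = DB6) (σ : G3) :
    polyAct D σ qForm = qForm := by
  let S : Submonoid G3 := (substStabilizer qForm).comap ((Units.coeHom _).comp D)
  have hSA : Agen ∈ S := by simpa [S, hA] using DA6_mem_substStabilizer
  have hSB : Bgen ∈ S := by simpa [S, hB] using DB6_mem_substStabilizer
  have hσ : σ ∈ S := submonoid_eq_top_of_Agen_mem_of_Bgen_mem hSA hSB ▸ Submonoid.mem_top σ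
  exact mem_substStabilizer.1 hσ

theorem injective_of_map_Agen_of_map_Bgen (hA : (D Agen : Matrix (Fin 6) (Fin 6) F2) = DA6)
    (hB : (D Bgen : Matrix (Fin 6) (Fin 6) F2) = DB6) : Function.Injective D := by
  let S : Submonoid G3 := (upperLeftBlockGraph (finSumFinEquiv (m := 3) (n := 3))).comap
    ((Units.coeHom _).prod ((Units.coeHom _).comp D))
  have hSA : Agen ∈ S := by simpa [S, hA] using Agen_DA6_mem_upperLeftBlockGraph
  have hSB : Bgen ∈ S := by simpa [S, hB] using Bgen_DB6_mem_upperLeftBlockGraph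
  have mem_S (σ : G3) : ((σ : Matrix (Fin 3) (Fin 3) F2), (D σ : Matrix (Fin 6) (Fin 6) F2)) ∈
      upperLeftBlockGraph (finSumFinEquiv (m := 3) (n := 3)) :=
    show σ ∈ S from submonoid_eq_top_of_Agen_mem_of_Bgen_mem hSA hSB ▸ Submonoid.mem_top σ
  intro σ τ hστ
  exact Units.ext (eq_of_mem_upperLeftBlockGraph (mem_S σ) (hστ ▸ mem_S τ))

end Representation

/-- The quadratic polynomial `q` is a `G`-invariant; moreover `q` is a
nondegenerate quadratic form of Witt index `3` (plus type) on `𝔽₂⁶` and the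
representation `D : G → GL₆(𝔽₂)` is injective; hence `D` embeds `G = GL₃(𝔽₂)` into the
orthogonal group `O₆⁺(𝔽₂)` of `q`. -/
theorem stmt17 (D : G3 →* GL (Fin 6) F2)
    (hA : (D Agen : Matrix (Fin 6) (Fin 6) F2) = DA6)
    (hB : (D Bgen : Matrix (Fin 6) (Fin 6) F2) = DB6) :
    -- `q` is `G`-invariant …
    (∀ σ : G3, polyAct D σ qForm = qForm) ∧
    -- … the polar form of `q` is nondegenerate …
    (∀ u : Fin 6 → F2,
      (∀ v : Fin 6 → F2,
        eval (u + v) qForm - eval u qForm - eval v qForm = 0) → u = 0) ∧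
    -- … `q` has Witt index `3` (plus type): there is a totally singular subspace of
    -- dimension `3` (necessarily maximal in dimension `6`) …
    (∃ T : Submodule F2 (Fin 6 → F2), Module.finrank F2 T = 3 ∧
      ∀ w ∈ T, eval w qForm = 0) ∧
    -- … and `D` is injective, so it embeds `G` into `O₆⁺(𝔽₂)`:
    Function.Injective D := by
  exact ⟨polyAct_qForm hA hB, fun _ hu ↦ isHyperbolic_eval_qForm.eq_zero_of_polar_eq_zero hu,
    isHyperbolic_eval_qForm.exists_totallySingular, injective_of_map_Agen_of_map_Bgen hA hB⟩
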